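/- Suppose t > 0 and (x,q) satisfies one of: (a) |x| ≥ Bt; (b) 0 ≤ x < Bt and either q ≤ x − Bt or q ≥ (√(Bt) − √x)²; (c) −Bt < x ≤ 0 and either q ≤ −(√(Bt) − √|x|)² or q ≥ x + Bt. Then I(x,t,q) = t·g_0((x−q)/t), and the infimum is attained by the straight-line path w(s) = q + (s/t)(x−q). -/

import Mathlib

/-! The lower bound on the cost is obtained by duality.  Since `g0 v` is the supremum of
`ρ (1 - ρ) - v ρ` over `ρ ∈ [0, 1]`, integrating the inequality `ρ (1 - ρ) - w' ρ ≤ g0 w'` along a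
path gives a lower bound depending only on the endpoints (`cost_ge_of_pointwise`).

* A path that avoids `0` costs at least `t g0 ((x - q) / t)`: take the optimal `ρ` for the slope
  `(x - q) / t` (`cost_ge_of_avoid`).
* A path that meets `0` is cut at its first and last zero.  Between the two the integrand is at
  least `c / 4 - w' / 2` and `w` has no net displacement; before and after, slopes `ρ₁`, `ρ₂` with
  `ρ₁ (1 - ρ₁) = ρ₂ (1 - ρ₂) = m ≤ c / 4` give in total the bound `m t + q ρ₁ - x ρ₂`
  (`cost_ge_of_hit`).

If `|x - q| ≥ B t`, the optimal `ρ` for `(x - q) / t` satisfies `ρ (1 - ρ) ≤ c / 4`, and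
`ρ₁ = ρ₂ = ρ` is the required bound.  Otherwise `x` and `q` have the same sign, and
`ρ₁, ρ₂ = (1 ± B) / 2` give `c t / 4 - (x - q) / 2 + B (|x| + |q|) / 2`.  This is at least
`t (1 - (x - q) / t)² / 4` exactly when `4 |x| |q| ≥ (B t - |x| - |q|)²`, a Heron-type inequality
saying that `√|x|`, `√|q|`, `√(B t)` satisfy the triangle inequalities (`heron_aux`).  Finally the
straight path meets `0` at most once unless `x = q = 0`, which forces `c = 1`, so its cost is
`t g0 ((x - q) / t)`. -/

open Filter Set MeasureTheory intervalIntegral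

/-- The Legendre conjugate `g₀` of the TASEP flux `f₀(ρ) = ρ(1−ρ)`:
`g₀(x) = −x` for `x ≤ −1`, `(1−x)²/4` for `−1 ≤ x ≤ 1`, and `0` for `x ≥ 1`. -/
noncomputable def g0 (x : ℝ) : ℝ :=
  if x ≤ -1 then -x else if x ≤ 1 then (1 - x) ^ 2 / 4 else 0

/-- The macroscopic rate profile: `λ(x) = 1` for `x ≠ 0` and `λ(0) = c`. -/
noncomputable def lam (c : ℝ) (x : ℝ) : ℝ := if x = 0 then c else 1

/-- `w` is piecewise `C¹` on `[a,b]`: continuous on `[a,b]` and `C¹` on each cell of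
some finite partition `a = p 0 < p 1 < ⋯ < p k = b`. -/
def PiecewiseC1On (w : ℝ → ℝ) (a b : ℝ) : Prop :=
  ContinuousOn w (Set.Icc a b) ∧
    ∃ (k : ℕ) (p : ℕ → ℝ), p 0 = a ∧ p k = b ∧ (∀ i < k, p i < p (i + 1)) ∧
      ∀ i < k, ContDiffOn ℝ 1 w (Set.Icc (p i) (p (i + 1)))

/-- The running cost `∫₀ᵗ λ(w(s)) g₀(w′(s)/λ(w(s))) ds` of a path `w : [0,t] → ℝ`. -/
noncomputable def pathCost (c t : ℝ) (w : ℝ → ℝ) : ℝ :=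
  ∫ s in (0 : ℝ)..t, lam c (w s) * g0 (deriv w s / lam c (w s))

/-- The variational (Hopf–Lax type) solution
`v(x,t) = sup { v₀(w(0)) − ∫₀ᵗ λ(w(s)) g₀(w′(s)/λ(w(s))) ds : w piecewise C¹, w(t) = x }`. -/
noncomputable def vVar (c : ℝ) (v0 : ℝ → ℝ) (x t : ℝ) : ℝ :=
  sSup { a | ∃ w : ℝ → ℝ, PiecewiseC1On w 0 t ∧ w t = x ∧ a = v0 (w 0) - pathCost c t w }

/-- The optimal control cost
`I(x,t,q) = inf { ∫₀ᵗ λ(w(s)) g₀(w′(s)/λ(w(s))) ds : w piecewise C¹, w(0) = q, w(t) = x }`. -/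
noncomputable def Icost (c : ℝ) (x t q : ℝ) : ℝ :=
  sInf { a | ∃ w : ℝ → ℝ, PiecewiseC1On w 0 t ∧ w 0 = q ∧ w t = x ∧ a = pathCost c t w }

/-! ### The function `g0` and its dual form -/

lemma g0_ge (v ρ : ℝ) (h0 : 0 ≤ ρ) (h1 : ρ ≤ 1) : ρ * (1 - ρ) - v * ρ ≤ g0 v := by
  unfold g0
  split_ifs with h h'
  · nlinarith [mul_nonneg (sub_nonneg.2 h1) (by linarith : 0 ≤ -1 - v), sq_nonneg (1 - ρ)]
  · nlinarith [sq_nonneg (1 - v - 2 * ρ)]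
  · nlinarith [mul_nonneg h0 (by linarith : 0 ≤ v - 1), sq_nonneg ρ]

lemma g0_le_quad (v : ℝ) : g0 v ≤ (1 - v) ^ 2 / 4 := by
  unfold g0
  split_ifs with h h'
  · nlinarith [sq_nonneg (1 + v)]
  · exact le_rfl
  · positivity

lemma g0_nonneg (v : ℝ) : 0 ≤ g0 v := by
  have := g0_ge v 0 le_rfl zero_le_one
  simpa using this

lemma g0_le_abs (v : ℝ) : g0 v ≤ 1 + |v| := by
  unfold g0
  split_ifs with h h'
  · linarith [neg_le_abs v]
  · nlinarith [abs_nonneg v, mul_nonneg (by linarith : 0 ≤ 1 + v) (by linarith : 0 ≤ 3 - v)]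
  · positivity

/-- The supremum defining `g0 v` is attained, at a `ρ` whose flux `ρ (1 - ρ)` is at most
`(1 - B²) / 4` as soon as `|v| ≥ B`. -/
lemma g0_attained (v B : ℝ) (hB0 : 0 ≤ B) (hB1 : B ≤ 1) :
    ∃ ρ, 0 ≤ ρ ∧ ρ ≤ 1 ∧ g0 v = ρ * (1 - ρ) - v * ρ ∧
      (B ≤ |v| → ρ * (1 - ρ) ≤ (1 - B ^ 2) / 4) := by
  have hB : B ^ 2 ≤ 1 := by nlinarith
  unfold g0
  split_ifs with h h'
  · exact ⟨1, zero_le_one, le_rfl, by ring, fun _ => by linarith⟩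
  · refine ⟨(1 - v) / 2, by linarith, by linarith, by ring, fun hv => ?_⟩
    have : B ^ 2 ≤ v ^ 2 := by rw [← sq_abs v]; gcongr
    nlinarith
  · exact ⟨0, le_rfl, zero_le_one, by ring, fun _ => by linarith⟩

lemma measurable_g0 : Measurable g0 := by
  unfold g0
  refine Measurable.ite measurableSet_Iic measurable_neg ?_
  exact Measurable.ite measurableSet_Iic (by fun_prop) measurable_const

lemma measurable_lam (c : ℝ) : Measurable (lam c) := by
  unfold lam
  exact Measurable.ite (measurableSet_singleton 0) measurable_const measurable_const

lemma lam_pos {c : ℝ} (hc : c ∈ Ioc (0 : ℝ) 1) (y : ℝ) : 0 < lam c y := by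
  unfold lam; split_ifs; exacts [hc.1, one_pos]

lemma lam_le_one {c : ℝ} (hc : c ∈ Ioc (0 : ℝ) 1) (y : ℝ) : lam c y ≤ 1 := by
  unfold lam; split_ifs; exacts [hc.2, le_rfl]

lemma le_lam {c : ℝ} (hc : c ∈ Ioc (0 : ℝ) 1) (y : ℝ) : c ≤ lam c y := by
  unfold lam; split_ifs; exacts [le_rfl, hc.2]

/-- The bound `c / 4 - v / 2` on the running cost, valid whether or not `y = 0`. -/
lemma running_ge_half {c : ℝ} (hc : c ∈ Ioc (0 : ℝ) 1) (y v : ℝ) :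
    c / 4 - v * (1 / 2) ≤ lam c y * g0 (v / lam c y) := by
  have hp := lam_pos hc y
  have h := mul_le_mul_of_nonneg_left
    (g0_ge (v / lam c y) (1 / 2) (by norm_num) (by norm_num)) hp.le
  have e : lam c y * (1 / 2 * (1 - 1 / 2) - v / lam c y * (1 / 2))
      = lam c y / 4 - v * (1 / 2) := by
    field_simp; ring
  linarith [le_lam hc y]

lemma running_ge_of_ne {c y v ρ : ℝ} (hy : y ≠ 0) (h0 : 0 ≤ ρ) (h1 : ρ ≤ 1) :
    ρ * (1 - ρ) - v * ρ ≤ lam c y * g0 (v / lam c y) := by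
  simpa [lam, hy] using g0_ge v ρ h0 h1

/-! ### Piecewise `C¹` paths -/

lemma exists_cell (p : ℕ → ℝ) (s : ℝ) (k : ℕ) (h0 : p 0 ≤ s) (hk : s < p k) :
    ∃ i < k, p i ≤ s ∧ s < p (i + 1) := by
  induction k with
  | zero => linarith
  | succ k ih =>
    by_cases h : s < p k
    · obtain ⟨i, hi, h'⟩ := ih h
      exact ⟨i, by omega, h'⟩
    · exact ⟨k, by omega, not_lt.1 h, hk⟩

lemma PiecewiseC1On.exists_countable {w : ℝ → ℝ} {a b : ℝ} (h : PiecewiseC1On w a b) :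
    ∃ S : Set ℝ, S.Countable ∧ ∀ s ∈ Ioo a b \ S, HasDerivAt w (deriv w s) s := by
  obtain ⟨-, k, p, rfl, rfl, -, hC⟩ := h
  refine ⟨range p, countable_range p, fun s hs => ?_⟩
  obtain ⟨i, hi, h1, h2⟩ := exists_cell p s k hs.1.1.le hs.1.2
  have h1' : p i < s := lt_of_le_of_ne h1 fun e => hs.2 ⟨i, e⟩
  exact ((hC i hi).differentiableOn one_ne_zero |>.differentiableAt
    (Icc_mem_nhds h1' h2)).hasDerivAt

lemma PiecewiseC1On.intervalIntegrable_deriv {w : ℝ → ℝ} {a b : ℝ} (h : PiecewiseC1On w a b) :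
    IntervalIntegrable (deriv w) volume a b := by
  obtain ⟨-, k, p, rfl, rfl, hlt, hC⟩ := h
  refine IntervalIntegrable.trans_iterate fun i hi => ?_
  have hle := (hlt i hi).le
  have hcont : ContinuousOn (derivWithin w (Icc (p i) (p (i + 1)))) (Icc (p i) (p (i + 1))) :=
    (hC i hi).continuousOn_derivWithin (uniqueDiffOn_Icc (hlt i hi)) le_rfl
  rw [← uIcc_of_le hle] at hcont
  have hint := hcont.intervalIntegrable (μ := volume)
  rw [intervalIntegrable_iff_integrableOn_Ioo_of_le hle] at hint ⊢
  refine hint.congr_fun (fun s hs => ?_) measurableSet_Ioo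
  rw [uIcc_of_le hle]
  exact derivWithin_of_mem_nhds (Icc_mem_nhds hs.1 hs.2)

lemma PiecewiseC1On.intervalIntegrable_running {c t : ℝ} {w : ℝ → ℝ} (hc : c ∈ Ioc (0 : ℝ) 1)
    (ht : 0 ≤ t) (h : PiecewiseC1On w 0 t) :
    IntervalIntegrable (fun s => lam c (w s) * g0 (deriv w s / lam c (w s))) volume 0 t := by
  have hd := h.intervalIntegrable_deriv
  rw [intervalIntegrable_iff_integrableOn_Icc_of_le ht] at hd ⊢
  have hw : AEMeasurable w (volume.restrict (Icc 0 t)) := h.1.aemeasurable measurableSet_Icc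
  have hl : AEMeasurable (fun s => lam c (w s)) (volume.restrict (Icc 0 t)) :=
    (measurable_lam c).comp_aemeasurable hw
  have hm : AEMeasurable (fun s => lam c (w s) * g0 (deriv w s / lam c (w s)))
      (volume.restrict (Icc 0 t)) :=
    hl.mul (measurable_g0.comp_aemeasurable ((measurable_deriv w).aemeasurable.div hl))
  have hone : IntegrableOn (fun _ : ℝ => (1 : ℝ)) (Icc 0 t) volume :=
    continuousOn_const.integrableOn_Icc
  refine Integrable.mono' (hone.add hd.abs) hm.aestronglyMeasurable (ae_of_all _ fun s => ?_)
  have hp := lam_pos hc (w s)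
  rw [Real.norm_of_nonneg (mul_nonneg hp.le (g0_nonneg _))]
  calc lam c (w s) * g0 (deriv w s / lam c (w s))
      ≤ lam c (w s) * (1 + |deriv w s / lam c (w s)|) := by gcongr; exact g0_le_abs _
    _ = lam c (w s) + |deriv w s| := by rw [abs_div, abs_of_pos hp]; field_simp
    _ ≤ 1 + |deriv w s| := by gcongr; exact lam_le_one hc _

/-! ### Lower bounds on the cost -/

/-- Integrated form of a pointwise affine lower bound on the running cost over `[a, b] ⊆ [0, t]`. -/
lemma cost_ge_of_pointwise {c t a b m ρ : ℝ} {w : ℝ → ℝ} (hc : c ∈ Ioc (0 : ℝ) 1)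
    (h : PiecewiseC1On w 0 t) (ha : 0 ≤ a) (hab : a ≤ b) (hb : b ≤ t)
    (hm : ∀ s ∈ Ioo a b, m - deriv w s * ρ ≤ lam c (w s) * g0 (deriv w s / lam c (w s))) :
    m * (b - a) - (w b - w a) * ρ ≤
      ∫ s in a..b, lam c (w s) * g0 (deriv w s / lam c (w s)) := by
  have hsub : uIcc a b ⊆ uIcc 0 t := by
    rw [uIcc_of_le hab, uIcc_of_le (ha.trans (hab.trans hb))]; exact Icc_subset_Icc ha hb
  have hF := (h.intervalIntegrable_running hc (ha.trans (hab.trans hb))).mono_set hsub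
  have hD := h.intervalIntegrable_deriv.mono_set hsub
  obtain ⟨S, hS, hd⟩ := h.exists_countable
  have hftc : ∫ s in a..b, deriv w s = w b - w a := by
    refine MeasureTheory.integral_eq_of_hasDerivAt_off_countable w (deriv w) hS
      ?_ (fun s hs => hd s ?_) hD
    · rw [uIcc_of_le hab]; exact h.1.mono (Icc_subset_Icc ha hb)
    · rw [min_eq_left hab, max_eq_right hab] at hs
      exact ⟨Ioo_subset_Ioo ha hb hs.1, hs.2⟩
  have hL : IntervalIntegrable (fun s => m - deriv w s * ρ) volume a b :=
    intervalIntegrable_const.sub (hD.mul_const ρ)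
  have := integral_mono_on_of_le_Ioo hab hL hF hm
  rw [integral_sub intervalIntegrable_const (hD.mul_const ρ), intervalIntegral.integral_mul_const,
    hftc, intervalIntegral.integral_const, smul_eq_mul] at this
  linarith

lemma cost_ge_of_avoid {c t ρ : ℝ} {w : ℝ → ℝ} (hc : c ∈ Ioc (0 : ℝ) 1) (ht : 0 ≤ t)
    (h : PiecewiseC1On w 0 t) (hne : ∀ s ∈ Icc 0 t, w s ≠ 0) (h0 : 0 ≤ ρ) (h1 : ρ ≤ 1) :
    ρ * (1 - ρ) * t - (w t - w 0) * ρ ≤ pathCost c t w := by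
  have := cost_ge_of_pointwise (m := ρ * (1 - ρ)) (ρ := ρ) hc h le_rfl ht le_rfl
    fun s hs => running_ge_of_ne (hne s (Ioo_subset_Icc_self hs)) h0 h1
  simpa [pathCost] using this

/-- Bound for a path meeting `0`, cut at its first zero `a` and its last zero `b`: the slope `ρ₁`
is used before `a`, the slope `1 / 2` between `a` and `b`, the slope `ρ₂` after `b`. -/
lemma cost_ge_of_hit {c t m ρ₁ ρ₂ : ℝ} {w : ℝ → ℝ} (hc : c ∈ Ioc (0 : ℝ) 1) (ht : 0 ≤ t)
    (h : PiecewiseC1On w 0 t) (hz : ∃ s ∈ Icc 0 t, w s = 0)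
    (h0 : 0 ≤ ρ₁) (h1 : ρ₁ ≤ 1) (h0' : 0 ≤ ρ₂) (h1' : ρ₂ ≤ 1)
    (e₁ : ρ₁ * (1 - ρ₁) = m) (e₂ : ρ₂ * (1 - ρ₂) = m) (hm : m ≤ c / 4) :
    m * t + w 0 * ρ₁ - w t * ρ₂ ≤ pathCost c t w := by
  have hK : IsCompact (Icc 0 t ∩ w ⁻¹' {0}) :=
    isCompact_Icc.of_isClosed_subset
      (h.1.preimage_isClosed_of_isClosed isClosed_Icc isClosed_singleton) inter_subset_left
  have hne : (Icc 0 t ∩ w ⁻¹' {0}).Nonempty := by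
    obtain ⟨s, hs, hs'⟩ := hz; exact ⟨s, hs, hs'⟩
  obtain ⟨a, ⟨⟨ha0, hat⟩, hwa⟩, hamin⟩ := hK.exists_isLeast hne
  obtain ⟨b, ⟨⟨hb0, hbt⟩, hwb⟩, hbmax⟩ := hK.exists_isGreatest hne
  have hab : a ≤ b := hamin ⟨⟨hb0, hbt⟩, hwb⟩
  simp only [mem_preimage, mem_singleton_iff] at hwa hwb
  have I1 := cost_ge_of_pointwise (m := m) (ρ := ρ₁) hc h le_rfl ha0 hat fun s hs => by
    rw [← e₁]
    refine running_ge_of_ne (fun hs0 => ?_) h0 h1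
    exact absurd (hamin ⟨⟨hs.1.le, hs.2.le.trans hat⟩, hs0⟩) (not_le.2 hs.2)
  have I2 := cost_ge_of_pointwise (m := c / 4) (ρ := 1 / 2) hc h ha0 hab hbt
    fun s _ => running_ge_half hc (w s) (deriv w s)
  have I3 := cost_ge_of_pointwise (m := m) (ρ := ρ₂) hc h hb0 hbt le_rfl fun s hs => by
    rw [← e₂]
    refine running_ge_of_ne (fun hs0 => ?_) h0' h1'
    exact absurd (hbmax ⟨⟨hb0.trans hs.1.le, hs.2.le⟩, hs0⟩) (not_le.2 hs.1)
  have hF := h.intervalIntegrable_running hc ht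
  have sub : ∀ u v : ℝ, 0 ≤ u → u ≤ v → v ≤ t → IntervalIntegrable
      (fun s => lam c (w s) * g0 (deriv w s / lam c (w s))) volume u v := fun u v hu huv hv => by
    refine hF.mono_set ?_
    rw [uIcc_of_le huv, uIcc_of_le ht]
    exact Icc_subset_Icc hu hv
  have e : pathCost c t w = _ := (integral_add_adjacent_intervals
    ((sub 0 a le_rfl ha0 hat).trans (sub a b ha0 hab hbt)) (sub b t hb0 hbt le_rfl)).symm
  rw [← integral_add_adjacent_intervals (sub 0 a le_rfl ha0 hat) (sub a b ha0 hab hbt)] at e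
  rw [hwa] at I1 I2
  rw [hwb] at I2 I3
  nlinarith [mul_le_mul_of_nonneg_right hm (sub_nonneg.2 hab)]

/-! ### Comparison of the bounds -/

/-- Nonnegativity of Heron's product for the lengths `√X`, `√Q`, `√P`. One triangle inequality is
assumed; the other two follow from `|X - Q| ≤ P`. -/
lemma heron_aux {X Q P : ℝ} (hX : 0 ≤ X) (hQ : 0 ≤ Q) (hP : 0 ≤ P) (hd : |X - Q| ≤ P)
    (hs : √P ≤ √X + √Q) : (X - Q) ^ 2 ≤ 2 * P * (X + Q) - P ^ 2 := by
  obtain ⟨d1, d2⟩ := abs_le.1 hd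
  have ha := Real.sqrt_nonneg X
  have hb := Real.sqrt_nonneg Q
  have hg := Real.sqrt_nonneg P
  have ea := Real.sq_sqrt hX
  have eb := Real.sq_sqrt hQ
  have eg := Real.sq_sqrt hP
  generalize √X = α at *
  generalize √Q = β at *
  generalize √P = γ at *
  subst ea eb eg
  have f1 : 0 ≤ α - β + γ := by
    by_contra! hn
    nlinarith [mul_nonneg ha hg]
  have f2 : 0 ≤ β + γ - α := by
    by_contra! hn
    nlinarith [mul_nonneg hb hg]
  have f3 : 0 ≤ α + β - γ := by linarith
  have f4 : 0 ≤ α + β + γ := by linarith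
  nlinarith [mul_nonneg (mul_nonneg f1 f2) (mul_nonneg f3 f4)]

lemma sqrt_le_add_of_cases {X Q P : ℝ}
    (h : P ≤ X ∨ (√P - √X) ^ 2 ≤ Q) : √P ≤ √X + √Q := by
  rcases h with h | h
  · linarith [Real.sqrt_le_sqrt h, Real.sqrt_nonneg Q]
  · linarith [Real.le_sqrt_of_sq_le h]

/-- Off the region `|x - q| ≥ B t`, the hypotheses on `(x, q)` force `x` and `q` to have the same
sign and `√(B t) ≤ √|x| + √|q|`. -/
lemma same_sign_of_cases {B x q t : ℝ} (hlt : |x - q| < B * t)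
    (hcase :
      B * t ≤ |x| ∨
      (0 ≤ x ∧ x < B * t ∧
        (q ≤ x - B * t ∨ (Real.sqrt (B * t) - Real.sqrt x) ^ 2 ≤ q)) ∨
      (-(B * t) < x ∧ x ≤ 0 ∧
        (q ≤ -(Real.sqrt (B * t) - Real.sqrt |x|) ^ 2 ∨ x + B * t ≤ q))) :
    ((0 ≤ x ∧ 0 ≤ q) ∨ (x ≤ 0 ∧ q ≤ 0)) ∧ √(B * t) ≤ √|x| + √|q| := by
  obtain ⟨d1, d2⟩ := abs_lt.1 hlt
  rcases hcase with h | ⟨h0, -, h | h⟩ | ⟨-, h0, h | h⟩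
  · refine ⟨?_, sqrt_le_add_of_cases (Or.inl h)⟩
    rcases le_total 0 x with h0 | h0
    · rw [abs_of_nonneg h0] at h; left; constructor <;> linarith
    · rw [abs_of_nonpos h0] at h; right; constructor <;> linarith
  · linarith
  · have hq : 0 ≤ q := (sq_nonneg _).trans h
    refine ⟨Or.inl ⟨h0, hq⟩, sqrt_le_add_of_cases (Or.inr ?_)⟩
    rwa [abs_of_nonneg h0, abs_of_nonneg hq]
  · have hq : q ≤ 0 := h.trans (neg_nonpos.2 (sq_nonneg _))
    refine ⟨Or.inr ⟨h0, hq⟩, sqrt_le_add_of_cases (Or.inr ?_)⟩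
    rw [abs_of_nonpos hq]; linarith
  · linarith

lemma quad_le_of_same_sign {c B x q t : ℝ} (hB0 : 0 ≤ B) (hB2 : B ^ 2 = 1 - c) (ht : 0 < t)
    (hd : |x - q| < B * t) (hss : (0 ≤ x ∧ 0 ≤ q) ∨ (x ≤ 0 ∧ q ≤ 0))
    (hs : √(B * t) ≤ √|x| + √|q|) :
    t * g0 ((x - q) / t) ≤ c / 4 * t - (x - q) / 2 + B * (|x| + |q|) / 2 := by
  have hxq : (|x| - |q|) ^ 2 = (x - q) ^ 2 := by
    rcases hss with ⟨hx, hq⟩ | ⟨hx, hq⟩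
    · rw [abs_of_nonneg hx, abs_of_nonneg hq]
    · rw [abs_of_nonpos hx, abs_of_nonpos hq]; ring
  have hd' : |(|x| - |q|)| ≤ B * t := (abs_abs_sub_abs_le_abs_sub x q).trans hd.le
  have H := heron_aux (abs_nonneg x) (abs_nonneg q) (by positivity) hd' hs
  rw [hxq] at H
  calc t * g0 ((x - q) / t) ≤ t * ((1 - (x - q) / t) ^ 2 / 4) := by gcongr; exact g0_le_quad _
    _ = t / 4 - (x - q) / 2 + (x - q) ^ 2 / (4 * t) := by field_simp; ring
    _ ≤ t / 4 - (x - q) / 2 + (2 * (B * t) * (|x| + |q|) - (B * t) ^ 2) / (4 * t) := by gcongr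
    _ = (1 - B ^ 2) / 4 * t - (x - q) / 2 + B * (|x| + |q|) / 2 := by field_simp; ring
    _ = _ := by rw [hB2]; ring

/-! ### The straight path -/

lemma deriv_straight (q x t s : ℝ) :
    deriv (fun s => q + (s / t) * (x - q)) s = (x - q) / t := by
  have : HasDerivAt (fun s => q + (s / t) * (x - q)) (1 / t * (x - q)) s :=
    (((hasDerivAt_id s).div_const t).mul_const (x - q)).const_add q
  rw [this.deriv]; ring

lemma pathCost_straight {c x q t : ℝ} (ht : 0 < t) (h : x = 0 → q = 0 → c = 1) :
    pathCost c t (fun s => q + (s / t) * (x - q)) = t * g0 ((x - q) / t) := by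
  have key : ∀ᵐ s : ℝ, lam c (q + (s / t) * (x - q)) = 1 := by
    by_cases hc : c = 1
    · exact ae_of_all _ fun s => by simp [lam, hc]
    by_cases hxq : x = q
    · subst hxq
      have : x ≠ 0 := fun h0 => hc (h h0 h0)
      exact ae_of_all _ fun s => by simp [lam, this]
    · have hne : x - q ≠ 0 := sub_ne_zero.2 hxq
      -- the only zero of the path is at `-q t / (x - q)`
      filter_upwards [Measure.ae_ne volume (-q * t / (x - q))] with s hs
      refine if_neg fun h0 => hs ?_
      rw [eq_div_iff hne]
      field_simp at h0
      linarith
  have : ∫ s in (0 : ℝ)..t, lam c (q + (s / t) * (x - q)) *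
        g0 (deriv (fun s => q + (s / t) * (x - q)) s / lam c (q + (s / t) * (x - q)))
      = ∫ _ in (0 : ℝ)..t, g0 ((x - q) / t) := by
    refine intervalIntegral.integral_congr_ae ?_
    filter_upwards [key] with s hs _
    rw [hs, deriv_straight, one_mul, div_one]
  rw [pathCost, this]
  simp

lemma piecewiseC1On_straight (q x : ℝ) {t : ℝ} (ht : 0 < t) :
    PiecewiseC1On (fun s => q + (s / t) * (x - q)) 0 t := by
  have hC : ContDiff ℝ 1 (fun s => q + (s / t) * (x - q)) := by fun_prop
  refine ⟨hC.continuous.continuousOn, 1, fun i => i * t, by simp, by simp, fun i _ => ?_,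
    fun i _ => hC.contDiffOn⟩
  push_cast; linarith

/-- in cases (5.2a)–(5.2c), `I(x,t,q) = t g₀((x−q)/t)` and the straight
line path `w(s) = q + (s/t)(x−q)` attains the infimum. -/
theorem Icost_straight_cases
    (c : ℝ) (hc : c ∈ Set.Ioc (0 : ℝ) 1)
    (B : ℝ) (hB : B = Real.sqrt (1 - c))
    (x q t : ℝ) (ht : 0 < t)
    (hcase :
      B * t ≤ |x| ∨
      (0 ≤ x ∧ x < B * t ∧
        (q ≤ x - B * t ∨ (Real.sqrt (B * t) - Real.sqrt x) ^ 2 ≤ q)) ∨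
      (-(B * t) < x ∧ x ≤ 0 ∧
        (q ≤ -(Real.sqrt (B * t) - Real.sqrt |x|) ^ 2 ∨ x + B * t ≤ q))) :
    Icost c x t q = t * g0 ((x - q) / t) ∧
      pathCost c t (fun s => q + (s / t) * (x - q)) = t * g0 ((x - q) / t) := by
  have hB0 : 0 ≤ B := hB ▸ Real.sqrt_nonneg _
  have hB2 : B ^ 2 = 1 - c := by rw [hB]; exact Real.sq_sqrt (by linarith [hc.2])
  have hB1 : B ≤ 1 := by nlinarith [hc.1]
  have hdeg : x = 0 → q = 0 → c = 1 := by
    rintro rfl rfl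
    simp only [abs_zero, Real.sqrt_zero, sub_zero, zero_sub, zero_add] at hcase
    have hBt : B * t ≤ 0 := by
      have hnn : 0 ≤ B * t := by positivity
      rcases hcase with h | ⟨-, -, h | h⟩ | ⟨-, -, h | h⟩ <;>
        first | linarith | (rw [Real.sq_sqrt hnn] at h; linarith)
    have : B ≤ 0 := by by_contra! hn; nlinarith [mul_pos hn ht]
    nlinarith
  have hS := pathCost_straight (c := c) ht hdeg
  refine ⟨IsLeast.csInf_eq ⟨⟨_, piecewiseC1On_straight q x ht, by simp, ?_, hS.symm⟩, ?_⟩, hS⟩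
  · field_simp; ring
  rintro _ ⟨w, hw, hw0, hwt, rfl⟩
  obtain ⟨ρ, h0, h1, hρ, hflux⟩ := g0_attained ((x - q) / t) B hB0 hB1
  have e : t * g0 ((x - q) / t) = ρ * (1 - ρ) * t - (x - q) * ρ := by
    rw [hρ]; field_simp
  by_cases hz : ∃ s ∈ Icc 0 t, w s = 0
  · rcases le_or_gt (B * t) |x - q| with hfar | hnear
    · have hv : B ≤ |(x - q) / t| := by rwa [abs_div, abs_of_pos ht, le_div_iff₀ ht]
      have := cost_ge_of_hit hc ht.le hw hz h0 h1 h0 h1 rfl rfl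
        (by linarith [hflux hv] : ρ * (1 - ρ) ≤ c / 4)
      rw [hw0, hwt] at this
      linarith
    · obtain ⟨hss, hs⟩ := same_sign_of_cases hnear hcase
      refine (quad_le_of_same_sign hB0 hB2 ht hnear hss hs).trans ?_
      have em : (1 - B) / 2 * (1 - (1 - B) / 2) = c / 4 := by nlinarith
      have ep : (1 + B) / 2 * (1 - (1 + B) / 2) = c / 4 := by nlinarith
      -- the slopes are those of motion at speed `B` towards, then away from, the origin
      rcases hss with ⟨hx, hq⟩ | ⟨hx, hq⟩
      · have := cost_ge_of_hit hc ht.le hw hz (by linarith) (by linarith) (by linarith)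
          (by linarith) ep em le_rfl
        rw [hw0, hwt] at this
        rw [abs_of_nonneg hx, abs_of_nonneg hq]
        linarith
      · have := cost_ge_of_hit hc ht.le hw hz (by linarith) (by linarith) (by linarith)
          (by linarith) em ep le_rfl
        rw [hw0, hwt] at this
        rw [abs_of_nonpos hx, abs_of_nonpos hq]
        linarith
  · push Not at hz
    have := cost_ge_of_avoid hc ht.le hw hz h0 h1
    rw [hw0, hwt] at this
    linarith
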